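/- For every integer n ≥ 1, the number of subtrees of the comb C_n is N(C_n) = 2^{n+2} − n − 4. -/

import Mathlib

/-- A subtree of a graph: a nonempty set of vertices inducing a connected subgraph. -/
def IsSubtree {V : Type*} (G : SimpleGraph V) (S : Finset V) : Prop :=
  S.Nonempty ∧ (G.induce (S : Set V)).Connected

/-- `N(T)`: the number of subtrees. -/
noncomputable def numSubtrees {V : Type*} [Fintype V] (G : SimpleGraph V) : ℕ :=
  Nat.card {S : Finset V // IsSubtree G S}

/-- The comb `C_n`: a path with `n` vertices (the `Sum.inl` vertices), with one pendant
leaf (the corresponding `Sum.inr` vertex) attached to each path vertex. -/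
def comb (n : ℕ) : SimpleGraph (Fin n ⊕ Fin n) :=
  SimpleGraph.fromRel fun a b => match a, b with
    | Sum.inl i, Sum.inl j => (i : ℕ) + 1 = (j : ℕ)
    | Sum.inl i, Sum.inr j => i = j
    | _, _ => False

/-!
A subtree of a graph with leaves attached is either a single leaf or a subtree `T` of the graph
without the leaves, together with an arbitrary set of the leaves attached to `T`. The comb is the
path on `n` vertices with one leaf at each vertex, and the subtrees of the path are its nonempty
intervals, so
`N(C_n) = n + ∑_{a ≤ b} 2 ^ (b - a + 1) = n + ∑_b (2 ^ (b + 2) - 2) = 2 ^ (n + 2) - n - 4`,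
where `a` and `b` range over `0, …, n - 1`.
-/

open Finset
open SimpleGraph (hasse pathGraph)

section Subtree

variable {V W : Type*} {G : SimpleGraph V} {H : SimpleGraph W}

theorem isSubtree_iff_connected {S : Finset V} :
    IsSubtree G S ↔ (G.induce (S : Set V)).Connected :=
  ⟨And.right, fun h => ⟨coe_nonempty.1 (Set.nonempty_coe_sort.1 h.nonempty), h⟩⟩

theorem isSubtree_singleton (v : V) : IsSubtree G {v} := by
  rw [isSubtree_iff_connected, coe_singleton]
  exact ⟨SimpleGraph.Preconnected.of_subsingleton⟩

theorem numSubtrees_eq_card_filter [Fintype V] [DecidablePred (IsSubtree G)] :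
    numSubtrees G = #{S | IsSubtree G S} := by
  rw [numSubtrees, Nat.card_eq_fintype_card, Fintype.card_subtype]

theorem reachable_map_of_forall_adj_reachable {f : V → W}
    (hf : ∀ u v, G.Adj u v → H.Reachable (f u) (f v)) {u v : V} (h : G.Reachable u v) :
    H.Reachable (f u) (f v) := by
  simp only [SimpleGraph.reachable_iff_reflTransGen] at *
  exact h.lift' f hf

theorem connected_iff_of_retraction (s : G →g H) (r : W → V)
    (hr : ∀ u v, H.Adj u v → G.Reachable (r u) (r v)) (hrs : ∀ v, r (s v) = v)
    (hsr : ∀ w, H.Reachable w (s (r w))) : H.Connected ↔ G.Connected where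
  mp h :=
    { preconnected u v := by
        simpa only [hrs] using reachable_map_of_forall_adj_reachable hr (h.preconnected (s u) (s v))
      nonempty := h.nonempty.map r }
  mpr h :=
    { preconnected u v := (hsr u).trans (((h.preconnected _ _).map s).trans (hsr v).symm)
      nonempty := h.nonempty.map s }

end Subtree

theorem card_filter_toLeft_and_toRight_subset {α β : Type*} [Fintype α] [Fintype β]
    [DecidableEq β] (p : Finset α → Prop) [DecidablePred p] (g : Finset α → Finset β) :
    #{S : Finset (α ⊕ β) | p S.toLeft ∧ S.toRight ⊆ g S.toLeft} =
      ∑ T with p T, 2 ^ #(g T) := by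
  simp_rw [← card_powerset, ← card_sigma]
  refine card_nbij' (fun S => ⟨S.toLeft, S.toRight⟩) (fun x => x.1.disjSum x.2) ?_ ?_ ?_ ?_
  · simp [Set.MapsTo]
  · simp [Set.MapsTo]
  · simp [Set.LeftInvOn, toLeft_disjSum_toRight]
  · simp [Set.LeftInvOn, Set.RightInvOn]

section AttachLeaves

variable {V ι : Type*}

/-- The graph obtained from `G` by attaching one new pendant leaf for each `i : ι`, at the vertex
`f i`. Taking `G` a path gives the caterpillars, and `f = id` the combs among them. The vertices of
`G` are the `Sum.inl` vertices and the leaves are the `Sum.inr` ones. -/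
def attachLeaves (G : SimpleGraph V) (f : ι → V) : SimpleGraph (V ⊕ ι) where
  Adj
    | .inl u, .inl v => G.Adj u v
    | .inl u, .inr i => f i = u
    | .inr i, .inl u => f i = u
    | .inr _, .inr _ => False
  symm.symm
    | .inl _, .inl _, h => G.adj_symm h
    | .inl _, .inr _, h => h
    | .inr _, .inl _, h => h
  loopless.irrefl
    | .inl _, h => G.irrefl h

variable {G : SimpleGraph V} {f : ι → V} {S : Finset (V ⊕ ι)}

theorem IsSubtree.eq_singleton_inr (hS : IsSubtree (attachLeaves G f) S) {i : ι}
    (hi : .inr i ∈ S) (hfi : .inl (f i) ∉ S) : S = {.inr i} := by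
  refine (eq_singleton_or_nontrivial hi).resolve_right fun hne => ?_
  have : Nontrivial (S : Set (V ⊕ ι)) := hne.coe_sort
  obtain ⟨⟨v | j, hv⟩, hadj⟩ := hS.2.preconnected.exists_adj_of_nontrivial ⟨.inr i, hi⟩
  · obtain rfl : f i = v := hadj
    exact hfi hv
  · exact hadj

theorem isSubtree_attachLeaves_iff_of_anchored (hS : ∀ i ∈ S.toRight, f i ∈ S.toLeft) :
    IsSubtree (attachLeaves G f) S ↔ IsSubtree G S.toLeft := by
  have mem_of_mem : ∀ w ∈ S, Sum.elim id f w ∈ S.toLeft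
    | .inl _, hv => mem_toLeft.2 hv
    | .inr i, hi => hS i (mem_toRight.2 hi)
  rw [isSubtree_iff_connected, isSubtree_iff_connected]
  refine connected_iff_of_retraction ⟨fun v => ⟨.inl v, mem_toLeft.1 v.2⟩, id⟩
    (fun w => ⟨Sum.elim id f w, mem_of_mem w w.2⟩) ?_ (fun _ => rfl) ?_
  · rintro ⟨u | i, hu⟩ ⟨v | j, hv⟩ hadj
    · exact SimpleGraph.Adj.reachable hadj
    · obtain rfl : f j = u := hadj
      rfl
    · obtain rfl : f i = v := hadj
      rfl
    · exact hadj.elim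
  · rintro ⟨v | i, hv⟩
    · rfl
    · exact SimpleGraph.Adj.reachable (show f i = f i from rfl)

theorem isSubtree_attachLeaves_iff :
    IsSubtree (attachLeaves G f) S ↔
      (∃ i, {.inr i} = S) ∨ IsSubtree G S.toLeft ∧ ∀ i ∈ S.toRight, f i ∈ S.toLeft := by
  constructor
  · intro hS
    by_cases hanchored : ∀ i ∈ S.toRight, f i ∈ S.toLeft
    · exact .inr ⟨(isSubtree_attachLeaves_iff_of_anchored hanchored).1 hS, hanchored⟩
    · push Not at hanchored
      obtain ⟨i, hi, hfi⟩ := hanchored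
      exact .inl ⟨i, (hS.eq_singleton_inr (mem_toRight.1 hi) (mt mem_toLeft.2 hfi)).symm⟩
  · rintro (⟨i, rfl⟩ | ⟨hS, hanchored⟩)
    · exact isSubtree_singleton _
    · exact (isSubtree_attachLeaves_iff_of_anchored hanchored).2 hS

theorem numSubtrees_attachLeaves [Fintype V] [Fintype ι] [DecidableEq V]
    [DecidablePred (IsSubtree G)] :
    numSubtrees (attachLeaves G f) =
      Fintype.card ι + ∑ T with IsSubtree G T, 2 ^ #{i | f i ∈ T} := by
  classical
  have hleaves : #{S : Finset (V ⊕ ι) | ∃ i, {.inr i} = S} = Fintype.card ι := by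
    rw [univ_filter_exists, card_image_of_injective, card_univ]
    exact fun i j h => Sum.inr_injective (singleton_injective h)
  rw [numSubtrees_eq_card_filter, ← hleaves, ← card_filter_toLeft_and_toRight_subset,
    ← card_union_of_disjoint, ← filter_or]
  · simp only [isSubtree_attachLeaves_iff, subset_iff, mem_filter_univ]
  · refine disjoint_filter.2 ?_
    rintro _ - ⟨i, rfl⟩ ⟨⟨⟨v, hv⟩, -⟩, -⟩
    simp at hv

end AttachLeaves

theorem injOn_Icc_setOf_le {α : Type*} [PartialOrder α] [LocallyFiniteOrder α] :
    Set.InjOn (fun p : α × α => Icc p.1 p.2) {p | p.1 ≤ p.2} := by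
  rintro ⟨a, b⟩ hab ⟨c, d⟩ - (h : Icc a b = Icc c d)
  rw [← coe_inj, coe_Icc, coe_Icc] at h
  exact Prod.ext_iff.2 ((Set.Icc_eq_Icc_iff hab).1 h)

theorem induce_hasse_of_ordConnected {α : Type*} [Preorder α] {s : Set α}
    (hs : s.OrdConnected) : (hasse α).induce s = hasse s := by
  ext a b
  have hcovBy (a b : s) : (a : α) ⋖ b ↔ a ⋖ b :=
    Set.OrdConnected.apply_covBy_apply_iff (OrderEmbedding.subtype (· ∈ s)) (by simpa using hs)
  simp [hcovBy]

section Hasse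

variable {α : Type*} [LinearOrder α]

theorem ordConnected_of_preconnected_induce_hasse {s : Set α}
    (hs : ((hasse α).induce s).Preconnected) : s.OrdConnected := by
  refine ⟨fun a ha b hb c hc => by_contra fun hcs => ?_⟩
  obtain ⟨w⟩ := hs ⟨a, ha⟩ ⟨b, hb⟩
  have ne_of_mem : ∀ x ∈ s, x ≠ c := fun x hx h => hcs (h ▸ hx)
  obtain ⟨⟨⟨⟨x, hx⟩, ⟨y, hy⟩⟩, hadj⟩, -, hxc, hyc⟩ :=
    w.exists_boundary_dart {x | x.1 < c} (hc.1.lt_of_ne (ne_of_mem a ha)) hc.2.not_gt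
  change x < c at hxc
  have hcy : c < y := (not_lt.1 hyc).lt_of_ne (ne_of_mem y hy).symm
  rcases hadj with hxy | hyx
  · exact hxy.2 hxc hcy
  · exact (hxc.trans hcy).not_gt hyx.lt

theorem preconnected_induce_hasse_iff [LocallyFiniteOrder α] {s : Set α} :
    ((hasse α).induce s).Preconnected ↔ s.OrdConnected := by
  refine ⟨ordConnected_of_preconnected_induce_hasse, fun hs => ?_⟩
  classical
  rw [induce_hasse_of_ordConnected hs]
  let := LinearLocallyFiniteOrder.succOrder s
  exact SimpleGraph.hasse_preconnected_of_succ s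

theorem isSubtree_hasse_iff [LocallyFiniteOrder α] {S : Finset α} :
    IsSubtree (hasse α) S ↔ ∃ a b, a ≤ b ∧ Icc a b = S := by
  constructor
  · rintro ⟨hne, hS⟩
    have hconn := preconnected_induce_hasse_iff.1 hS.preconnected
    refine ⟨S.min' hne, S.max' hne, min'_le_max' _ hne, subset_antisymm ?_ ?_⟩
    · rw [← coe_subset, coe_Icc]
      exact hconn.out (min'_mem _ hne) (max'_mem _ hne)
    · exact fun c hc => mem_Icc.2 ⟨min'_le _ _ hc, le_max' _ _ hc⟩
  · rintro ⟨a, b, hab, rfl⟩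
    have hne : (Icc a b).Nonempty := nonempty_Icc.2 hab
    refine ⟨hne, ?_⟩
    rw [SimpleGraph.connected_iff, preconnected_induce_hasse_iff, coe_Icc]
    exact ⟨Set.ordConnected_Icc, ⟨a, Set.left_mem_Icc.2 hab⟩⟩

theorem sum_isSubtree_hasse [LocallyFiniteOrder α] [Fintype α]
    [DecidablePred (IsSubtree (hasse α))] {M : Type*} [AddCommMonoid M] (f : Finset α → M) :
    ∑ S with IsSubtree (hasse α) S, f S = ∑ p : α × α with p.1 ≤ p.2, f (Icc p.1 p.2) := by
  rw [← sum_image (f := f) (g := fun p : α × α => Icc p.1 p.2) (by simpa using injOn_Icc_setOf_le)]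
  congr 1
  ext S
  simp [isSubtree_hasse_iff]

end Hasse

theorem comb_eq_attachLeaves_pathGraph (n : ℕ) :
    comb n = attachLeaves (pathGraph n) id := by
  ext (i | i) (j | j)
  · simp only [comb, attachLeaves, SimpleGraph.fromRel_adj, SimpleGraph.pathGraph_adj, ne_eq,
      Sum.inl.injEq, Fin.ext_iff]
    omega
  all_goals simp [comb, attachLeaves, eq_comm]

theorem sum_range_two_pow_add_one (n : ℕ) : ∑ k ∈ range n, 2 ^ k + 1 = 2 ^ n := by
  simpa only [mul_one, one_add_one_eq_two] using geom_sum_mul_add (1 : ℕ) n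

theorem sum_Iic_two_pow_card_Icc_add_two {n : ℕ} (b : Fin n) :
    ∑ a ∈ Iic b, 2 ^ #(Icc a b) + 2 = 2 ^ ((b : ℕ) + 2) := by
  have hsum : ∑ a ∈ Iic b, 2 ^ #(Icc a b) = ∑ k ∈ range (b + 1), 2 ^ k * 2 :=
    calc
      ∑ a ∈ Iic b, 2 ^ #(Icc a b) = ∑ k ∈ (Iic b).map Fin.valEmbedding, 2 ^ (b + 1 - k) := by
        simp only [Fin.card_Icc, sum_map, Fin.valEmbedding_apply]
      _ = ∑ k ∈ range (b + 1), 2 ^ (b - k) * 2 := by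
        rw [Fin.map_valEmbedding_Iic, ← Nat.range_succ_eq_Iic]
        refine sum_congr rfl fun k hk => ?_
        rw [← pow_succ, Nat.sub_add_comm (mem_range_succ_iff.1 hk)]
      _ = ∑ k ∈ range (b + 1), 2 ^ k * 2 := sum_flip fun k => 2 ^ k * 2
  rw [hsum, ← sum_mul, pow_succ, ← sum_range_two_pow_add_one, add_mul, one_mul]

theorem sum_two_pow_card_Icc_add (n : ℕ) :
    ∑ p : Fin n × Fin n with p.1 ≤ p.2, 2 ^ #(Icc p.1 p.2) + 2 * n + 4 = 2 ^ (n + 2) := by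
  calc
    _ = ∑ b : Fin n, (∑ a ∈ Iic b, 2 ^ #(Icc a b) + 2) + 4 := by
      rw [sum_finset_product_right _ univ Iic (by simp), sum_add_distrib]
      simp [mul_comm]
    _ = (∑ b ∈ range n, 2 ^ b + 1) * 2 ^ 2 := by
      simp_rw [sum_Iic_two_pow_card_Icc_add_two]
      rw [Fin.sum_univ_eq_sum_range (fun b => 2 ^ (b + 2)), add_mul, sum_mul]
      simp only [pow_add, Nat.reducePow, one_mul]
    _ = 2 ^ (n + 2) := by rw [sum_range_two_pow_add_one, pow_add]

theorem numSubtrees_comb_add (n : ℕ) : numSubtrees (comb n) + n + 4 = 2 ^ (n + 2) := by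
  classical
  have hcount : numSubtrees (comb n) =
      n + ∑ p : Fin n × Fin n with p.1 ≤ p.2, 2 ^ #(Icc p.1 p.2) := by
    rw [comb_eq_attachLeaves_pathGraph, numSubtrees_attachLeaves, Fintype.card_fin]
    simp only [id, filter_univ_mem]
    rw [pathGraph, sum_isSubtree_hasse fun S => 2 ^ #S]
  rw [hcount, ← sum_two_pow_card_Icc_add n]
  ring

theorem stmt16 (n : ℕ) (hn : 1 ≤ n) :
    numSubtrees (comb n) = 2 ^ (n + 2) - n - 4 := by
  have := numSubtrees_comb_add n
  omega
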